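/- arXiv:1412.8525 — 2 statements merged into one kernel-verified Lean document; each statement's English description precedes it below -/
import Mathlib

section
/- Let A be a type and F : Type u ⥤ Type u an endofunctor, and let E be the exponential functor with E.obj X = (A → F.obj X), acting on a function f by postcomposition with F.map f. Suppose the family of predicate liftings (Λ i)_{i ∈ I} is separating for F. Then the family of liftings indexed by pairs (i, a) with i ∈ I and a ∈ A, sending a type X and U : Set X to { g : A → F.obj X | g a ∈ Λ i X U }, is separating for E. -/
open CategoryTheory

universe u v

/-- A predicate lifting for an endofunctor `F : Type u ⥤ Type u`: a family of maps
`Set X → Set (F.obj X)` natural with respect to preimages. -/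
def IsPredLifting (F : Type u ⥤ Type u)
    (Λ : (X : Type u) → Set X → Set (F.obj X)) : Prop :=
  ∀ (X Y : Type u) (f : X → Y) (U : Set Y),
    Λ X (f ⁻¹' U) = F.map (↾f) ⁻¹' (Λ Y U)

/-- A family of predicate liftings is separating if any two distinct elements of `F.obj X`
are distinguished by some lifting applied to some subset. -/
def IsSeparating (F : Type u ⥤ Type u) {ι : Type v}
    (Λ : ι → (X : Type u) → Set X → Set (F.obj X)) : Prop :=
  ∀ (X : Type u) (x y : F.obj X), x ≠ y →
    ∃ (i : ι) (U : Set X), Xor' (x ∈ Λ i X U) (y ∈ Λ i X U)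

/-- The exponential functor `X ↦ (A → F.obj X)`. -/
def expFunctor (A : Type u) (F : Type u ⥤ Type u) : Type u ⥤ Type u where
  obj X := A → F.obj X
  map f := ↾fun g a => F.map f (g a)
  map_id X := by ext g a; simp
  map_comp f g := by ext h a; simp

theorem isSeparating_exp (A : Type u) (F : Type u ⥤ Type u)
    {ι : Type v}
    (Λ : ι → (X : Type u) → Set X → Set (F.obj X))
    (hlift : ∀ i : ι, IsPredLifting F (Λ i))
    (hsep : IsSeparating F Λ) :
    IsSeparating (expFunctor A F)
      (fun (p : ι × A) (X : Type u) (U : Set X) =>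
        { g : A → F.obj X | g p.2 ∈ Λ p.1 X U }) := by
  intro X x y hxy
  obtain ⟨a, ha⟩ := Function.ne_iff.mp (show (x : A → F.obj X) ≠ y from hxy)
  obtain ⟨i, U, h⟩ := hsep X _ _ ha
  exact ⟨(i, a), U, h⟩
end

section
/- The finite distribution functor D : Type u ⥤ Type u preserves filtered colimits (i.e., D is ω-accessible). -/
open CategoryTheory
open scoped NNReal

universe u

/-- The finite distribution functor `D : Type u ⥤ Type u`, sending `X` to the type of
finitely supported probability distributions on `X`, and `f` to the pushforward
`Finsupp.mapDomain f`. -/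
noncomputable def DistFunctor : Type u ⥤ Type u where
  obj X := { d : X →₀ ℝ≥0 // ∑ x ∈ d.support, d x = 1 }
  map f := TypeCat.ofHom fun d => ⟨Finsupp.mapDomain f d.1, by
    have h : (Finsupp.mapDomain f d.1).sum (fun _ v => v) = d.1.sum (fun _ v => v) :=
      Finsupp.sum_mapDomain_index (fun _ => rfl) (fun _ _ _ => rfl)
    simpa [Finsupp.sum] using h.trans (by simpa [Finsupp.sum] using d.2)⟩
  map_id X := by
    refine ConcreteCategory.hom_ext _ _ fun d => ?_
    exact Subtype.ext Finsupp.mapDomain_id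
  map_comp f g := by
    refine ConcreteCategory.hom_ext _ _ fun d => ?_
    exact Subtype.ext (Finsupp.mapDomain_comp (v := d.1) (f := fun x => f x) (g := fun x => g x))

theorem dist_sum_mapDomain {X Y : Type u} (f : X → Y) (d : X →₀ ℝ≥0) :
    ∑ y ∈ (Finsupp.mapDomain f d).support, Finsupp.mapDomain f d y = ∑ x ∈ d.support, d x :=
  Finsupp.sum_mapDomain_index (h := fun _ v => v) (fun _ => rfl) (fun _ _ _ => rfl)

theorem dist_surj {J : Type u} [Category.{u} J] [IsFiltered J] {F : J ⥤ Type u}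
    {t : Limits.Cocone F} (ht : Limits.IsColimit t) (d : t.pt →₀ ℝ≥0) :
    ∃ (j : J) (e : F.obj j →₀ ℝ≥0), Finsupp.mapDomain (fun x => t.ι.app j x) e = d := by
  have key : ∀ {j k : J} (f : j ⟶ k) (e : F.obj j →₀ ℝ≥0),
      Finsupp.mapDomain (fun x => t.ι.app k x) (Finsupp.mapDomain (fun x => F.map f x) e) =
        Finsupp.mapDomain (fun x => t.ι.app j x) e := by
    intro j k f e
    rw [← Finsupp.mapDomain_comp]
    refine Finsupp.mapDomain_congr fun x _ => ?_
    exact ConcreteCategory.congr_hom (t.w f) x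
  induction d using Finsupp.induction_linear with
  | zero => exact ⟨IsFiltered.nonempty.some, 0, Finsupp.mapDomain_zero⟩
  | add d₁ d₂ h₁ h₂ =>
    obtain ⟨j₁, e₁, rfl⟩ := h₁
    obtain ⟨j₂, e₂, rfl⟩ := h₂
    refine ⟨IsFiltered.max j₁ j₂,
      Finsupp.mapDomain (fun x => F.map (IsFiltered.leftToMax j₁ j₂) x) e₁ +
      Finsupp.mapDomain (fun x => F.map (IsFiltered.rightToMax j₁ j₂) x) e₂, ?_⟩
    rw [Finsupp.mapDomain_add, key, key]
  | single p r =>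
    obtain ⟨j, y, rfl⟩ := Limits.Types.jointly_surjective F ht p
    exact ⟨j, Finsupp.single y r, Finsupp.mapDomain_single⟩

theorem dist_pairs {J : Type u} [Category.{u} J] [IsFiltered J] {F : J ⥤ Type u}
    {t : Limits.Cocone F} (ht : Limits.IsColimit t) {i : J} (P : Finset (F.obj i × F.obj i))
    (hP : ∀ p ∈ P, t.ι.app i p.1 = t.ι.app i p.2) :
    ∃ (k : J) (f : i ⟶ k), ∀ p ∈ P, F.map f p.1 = F.map f p.2 := by
  classical
  induction P using Finset.induction_on with
  | empty => exact ⟨i, 𝟙 i, by simp⟩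
  | insert p P _ ih =>
    obtain ⟨k, f, hf⟩ := ih fun q hq => hP q (Finset.mem_insert_of_mem hq)
    obtain ⟨l, g, hg⟩ := (Limits.Types.FilteredColimit.isColimit_eq_iff' ht p.1 p.2).1
      (hP p (Finset.mem_insert_self _ _))
    obtain ⟨m, a, b, hab⟩ : ∃ (m : J) (a : k ⟶ m) (b : l ⟶ m), f ≫ a = g ≫ b := by
      obtain ⟨m, a, b, h⟩ := IsFiltered.span f g
      exact ⟨m, a, b, h⟩
    refine ⟨m, f ≫ a, fun q hq => ?_⟩
    rcases Finset.mem_insert.1 hq with rfl | hq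
    · rw [hab]
      simp [hg]
    · simp [hf q hq]

theorem dist_inj {J : Type u} [Category.{u} J] [IsFiltered J] {F : J ⥤ Type u}
    {t : Limits.Cocone F} (ht : Limits.IsColimit t) {i : J} (x y : F.obj i →₀ ℝ≥0)
    (h : Finsupp.mapDomain (fun a => t.ι.app i a) x = Finsupp.mapDomain (fun a => t.ι.app i a) y) :
    ∃ (k : J) (f : i ⟶ k), Finsupp.mapDomain (fun a => F.map f a) x =
      Finsupp.mapDomain (fun a => F.map f a) y := by
  classical
  let S := x.support ∪ y.support
  obtain ⟨k, f, hf⟩ := dist_pairs ht ((S ×ˢ S).filter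
    fun p => t.ι.app i p.1 = t.ι.app i p.2) (fun p hp => (Finset.mem_filter.1 hp).2)
  refine ⟨k, f, ?_⟩
  rcases isEmpty_or_nonempty (F.obj i) with he | ⟨⟨a₀⟩⟩
  · rw [Subsingleton.elim x y]
  · obtain ⟨g, hg⟩ : ∃ g : t.pt → F.obj k, ∀ a ∈ S, F.map f a = g (t.ι.app i a) := by
      refine ⟨fun p => if h : ∃ a ∈ S, t.ι.app i a = p then F.map f h.choose else F.map f a₀, ?_⟩
      intro a ha
      have h : ∃ b ∈ S, t.ι.app i b = t.ι.app i a := ⟨a, ha, rfl⟩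
      beta_reduce
      rw [dif_pos h]
      exact hf (a, h.choose) (Finset.mem_filter.2
        ⟨Finset.mem_product.2 ⟨ha, h.choose_spec.1⟩, h.choose_spec.2.symm⟩)
    have hx : ∀ z : F.obj i →₀ ℝ≥0, z.support ⊆ S → Finsupp.mapDomain (fun a => F.map f a) z =
        Finsupp.mapDomain g (Finsupp.mapDomain (fun a => t.ι.app i a) z) := by
      intro z hz
      rw [← Finsupp.mapDomain_comp]
      exact Finsupp.mapDomain_congr fun a ha => hg a (hz ha)
    rw [hx x Finset.subset_union_left, hx y Finset.subset_union_right, h]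

/-- The finite distribution functor is `ω`-accessible: it preserves filtered colimits. -/
theorem distFunctor_preservesFilteredColimits :
    Limits.PreservesFilteredColimits DistFunctor.{u} := by
  refine ⟨fun J _ _ => ⟨fun {F} => ⟨fun {t} ht => ⟨?_⟩⟩⟩⟩
  refine Limits.Types.FilteredColimit.isColimitOf' _ _ ?_ ?_
  · rintro ⟨d, hd⟩
    obtain ⟨j, e, rfl⟩ := dist_surj ht d
    exact ⟨j, ⟨e, (dist_sum_mapDomain _ e).symm.trans hd⟩, rfl⟩
  · rintro i ⟨x, hx⟩ ⟨y, hy⟩ h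
    obtain ⟨k, f, hf⟩ := dist_inj ht x y (congrArg Subtype.val h)
    exact ⟨k, f, Subtype.ext hf⟩
end
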